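/- If X is non-empty, then |R| ≤ 2 or X is a clique cutset of G. -/

import Mathlib

open SimpleGraph

/-- The claw `K_{1,3}`: vertex 0 adjacent to 1, 2, 3. -/
def claw : SimpleGraph (Fin 4) := SimpleGraph.fromRel (fun a _ => a = 0)

/-- `4K_1`: the edgeless graph on four vertices. -/
def fourK1 : SimpleGraph (Fin 4) := ⊥

/-- `K_5 - e`: the complete graph on five vertices minus the edge {0,1}. -/
def K5e : SimpleGraph (Fin 5) :=
  SimpleGraph.fromRel (fun a b => ¬(a = 0 ∧ b = 1) ∧ ¬(a = 1 ∧ b = 0))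

/-- The 5-wheel: the cycle 0-1-2-3-4-0 together with hub 5 adjacent to all. -/
def wheel5 : SimpleGraph (Fin 6) :=
  SimpleGraph.fromRel (fun a b =>
    (a ≠ 5 ∧ b ≠ 5 ∧ b.val = (a.val + 1) % 5) ∨ a = 5 ∨ b = 5)

/-- The `C_5`-twin: the cycle 0-1-2-3-4-0 together with vertex 5, a true twin
of vertex 0 (adjacent to 0, 1 and 4). -/
def C5twin : SimpleGraph (Fin 6) :=
  SimpleGraph.fromRel (fun a b =>
    (a ≠ 5 ∧ b ≠ 5 ∧ b.val = (a.val + 1) % 5) ∨ (a = 5 ∧ (b = 0 ∨ b = 1 ∨ b = 4)))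

/-- The `P_5`-twin: the path 0-1-2-3-4 together with vertex 5, a true twin of
the middle vertex 2 (adjacent to 1, 2 and 3). -/
def P5twin : SimpleGraph (Fin 6) :=
  SimpleGraph.fromRel (fun a b =>
    (a ≠ 5 ∧ b ≠ 5 ∧ b.val = a.val + 1) ∨ (a = 5 ∧ (b = 1 ∨ b = 2 ∨ b = 3)))

/-- The chordless cycle on seven vertices. -/
def C7 : SimpleGraph (Fin 7) :=
  SimpleGraph.fromRel (fun a b => b.val = (a.val + 1) % 7)

/-- `G` is `H`-free: `G` contains no induced subgraph isomorphic to `H`,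
i.e. there is no graph embedding of `H` into `G`. -/
def Free {V W : Type*} (G : SimpleGraph V) (H : SimpleGraph W) : Prop :=
  IsEmpty (H ↪g G)

/-- `X_i`: vertices outside the five-cycle `v 0, …, v 4` whose neighbours on the
cycle are exactly `v i` and `v (i+1)`. -/
def cycX {V : Type*} (G : SimpleGraph V) (v : ZMod 5 → V) (i : ZMod 5) : Set V :=
  {w | w ∉ Set.range v ∧ ∀ j : ZMod 5, G.Adj w (v j) ↔ (j = i ∨ j = i + 1)}

/-- `Y_i`: vertices outside the five-cycle whose neighbours on the cycle are
exactly `v i, v (i+1), v (i+2), v (i+3)`. -/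
def cycY {V : Type*} (G : SimpleGraph V) (v : ZMod 5 → V) (i : ZMod 5) : Set V :=
  {w | w ∉ Set.range v ∧
    ∀ j : ZMod 5, G.Adj w (v j) ↔ (j = i ∨ j = i + 1 ∨ j = i + 2 ∨ j = i + 3)}

/-- `R`: vertices outside the five-cycle with no neighbour on the cycle. -/
def cycR {V : Type*} (G : SimpleGraph V) (v : ZMod 5 → V) : Set V :=
  {w | w ∉ Set.range v ∧ ∀ j : ZMod 5, ¬ G.Adj w (v j)}

theorem no_claw {V : Type*} {G : SimpleGraph V} (h : _root_.Free G claw) {a b c d : V}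
    (hab : G.Adj a b) (hac : G.Adj a c) (had : G.Adj a d)
    (nbc : b ≠ c) (nbd : b ≠ d) (ncd : c ≠ d)
    (hbc : ¬ G.Adj b c) (hbd : ¬ G.Adj b d) (hcd : ¬ G.Adj c d) : False := by
  have h1 := hab.ne
  have h2 := hac.ne
  have h3 := had.ne
  refine h.false ⟨⟨![a, b, c, d], ?_⟩, ?_⟩
  · intro x y
    fin_cases x <;> fin_cases y <;> simp [*, Ne.symm, h1.symm, h2.symm, h3.symm, nbc.symm, nbd.symm, ncd.symm]
  · intro x y
    change G.Adj (![a, b, c, d] x) (![a, b, c, d] y) ↔ _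
    fin_cases x <;> fin_cases y <;> simp [claw, *, G.adj_comm c b, G.adj_comm d b, G.adj_comm d c, hab.symm, hac.symm, had.symm]

theorem no_4K1 {V : Type*} {G : SimpleGraph V} (h : _root_.Free G fourK1) {a b c d : V}
    (nab : a ≠ b) (nac : a ≠ c) (nad : a ≠ d)
    (nbc : b ≠ c) (nbd : b ≠ d) (ncd : c ≠ d)
    (hab : ¬ G.Adj a b) (hac : ¬ G.Adj a c) (had : ¬ G.Adj a d)
    (hbc : ¬ G.Adj b c) (hbd : ¬ G.Adj b d) (hcd : ¬ G.Adj c d) : False := by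
  refine h.false ⟨⟨![a, b, c, d], ?_⟩, ?_⟩
  · intro x y
    fin_cases x <;> fin_cases y <;> simp [*, nab.symm, nac.symm, nad.symm, nbc.symm, nbd.symm, ncd.symm]
  · intro x y
    change G.Adj (![a, b, c, d] x) (![a, b, c, d] y) ↔ _
    fin_cases x <;> fin_cases y <;> simp [fourK1, *, G.adj_comm c b, G.adj_comm d b, G.adj_comm d c, G.adj_comm b a, G.adj_comm c a, G.adj_comm d a]

theorem no_K5e {V : Type*} {G : SimpleGraph V} (h : _root_.Free G K5e) {a b c d e : V}
    (nab : a ≠ b) (hab : ¬ G.Adj a b) (hac : G.Adj a c) (had : G.Adj a d) (hae : G.Adj a e)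
    (hbc : G.Adj b c) (hbd : G.Adj b d) (hbe : G.Adj b e)
    (hcd : G.Adj c d) (hce : G.Adj c e) (hde : G.Adj d e) : False := by
  refine h.false ⟨⟨![a, b, c, d, e], ?_⟩, ?_⟩
  · intro x y
    fin_cases x <;> fin_cases y <;> simp [nab, nab.symm, hac.ne, had.ne, hae.ne, hbc.ne, hbd.ne,
      hbe.ne, hcd.ne, hce.ne, hde.ne, hac.ne', had.ne', hae.ne', hbc.ne', hbd.ne',
      hbe.ne', hcd.ne', hce.ne', hde.ne']
  · intro x y
    change G.Adj (![a, b, c, d, e] x) (![a, b, c, d, e] y) ↔ _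
    fin_cases x <;> fin_cases y <;> simp [K5e, *, G.adj_comm b a, hac.symm, had.symm, hae.symm,
      hbc.symm, hbd.symm, hbe.symm, hcd.symm, hce.symm, hde.symm]

theorem mem_X_of_adj {V : Type*} {G : SimpleGraph V} (hclaw : _root_.Free G claw)
    (v : ZMod 5 → V) (hv : Function.Injective v)
    (hC : ∀ i j : ZMod 5, G.Adj (v i) (v j) ↔ (j = i + 1 ∨ i = j + 1))
    {r w : V} (hr : r ∈ cycR G v) (hrw : G.Adj r w) (i : ZMod 5) (hi : G.Adj w (v i)) :
    w ∈ ⋃ i : ZMod 5, cycX G v i := by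
  obtain ⟨hr1, hr2⟩ := hr
  have hw : w ∉ Set.range v := by
    rintro ⟨j, rfl⟩
    exact hr2 j hrw
  have hrv : ∀ j, r ≠ v j := fun j e => hr1 ⟨j, e.symm⟩
  have hwv : ∀ j, w ≠ v j := fun j e => hw ⟨j, e.symm⟩
  -- neighbours of `w` on the cycle form a clique
  have key : ∀ a b : ZMod 5, G.Adj w (v a) → G.Adj w (v b) → a ≠ b → (b = a + 1 ∨ a = b + 1) := by
    intro a b ha hb hab
    by_contra hn
    exact no_claw hclaw hrw.symm ha hb (hrv a) (hrv b) (hv.ne hab) (hr2 a) (hr2 b)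
      (fun h => hn ((hC a b).1 h))
  have two : G.Adj w (v (i + 1)) ∨ G.Adj w (v (i - 1)) := by
    by_contra! hn
    refine no_claw hclaw hi.symm ((hC i (i + 1)).2 (Or.inl rfl))
      ((hC i (i - 1)).2 (Or.inr (by ring))) (hwv _) (hwv _) (hv.ne ?_) hn.1 hn.2 ?_
    · clear * -; revert i; decide
    · rw [hC]; clear * -; revert i; decide
  have fin : ∀ k, G.Adj w (v k) → G.Adj w (v (k + 1)) → w ∈ cycX G v k := by
    intro k h1 h2
    refine ⟨hw, fun j => ⟨fun hj => ?_, ?_⟩⟩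
    · have e1 := key k j h1 hj
      have e2 := key (k + 1) j h2 hj
      clear * - e1 e2
      revert k j; decide
    · rintro (rfl | rfl) <;> assumption
  rw [Set.mem_iUnion]
  rcases two with h | h
  · exact ⟨i, fin i hi h⟩
  · exact ⟨i - 1, fin _ h (by rwa [sub_add_cancel])⟩

theorem stmt_13     {V : Type*} [Fintype V] (G : SimpleGraph V)
    (hconn : G.Connected)
    (hclaw : _root_.Free G claw) (h4K1 : _root_.Free G fourK1) (hK5e : _root_.Free G K5e)
    (hW5 : _root_.Free G wheel5) (hC5t : _root_.Free G C5twin) (hP5t : _root_.Free G P5twin)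
    (v : ZMod 5 → V) (hv : Function.Injective v)
    (hC : ∀ i j : ZMod 5, G.Adj (v i) (v j) ↔ (j = i + 1 ∨ i = j + 1))
    (hX : (⋃ i : ZMod 5, cycX G v i).Nonempty) :
    (cycR G v).ncard ≤ 2 ∨
      (G.IsClique (⋃ i : ZMod 5, cycX G v i) ∧
        ¬ (G.induce ((⋃ i : ZMod 5, cycX G v i)ᶜ : Set V)).Connected) := by
  by_cases hR : (cycR G v).ncard ≤ 2
  · exact Or.inl hR
  right
  have hne : ∀ i : ZMod 5, i ≠ i + 2 ∧ i + 2 ≠ i + 4 ∧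
      ¬ (i + 4 = i + 2 + 1 ∨ i + 2 = i + 4 + 1) ∧ ¬ (i + 2 = i ∨ i + 2 = i + 1) ∧
      ¬ (i + 4 = i ∨ i + 4 = i + 1) := by decide
  have hnv : ∀ i, ¬ G.Adj (v (i + 2)) (v (i + 4)) := fun i h => (hne i).2.2.1 ((hC _ _).1 h)
  have hrv : ∀ r ∈ cycR G v, ∀ j, r ≠ v j := fun r hr j e => hr.1 ⟨j, e.symm⟩
  have hRcl : ∀ r ∈ cycR G v, ∀ s ∈ cycR G v, r ≠ s → G.Adj r s := by
    intro r hr s hs hrs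
    by_contra hn
    exact no_4K1 h4K1 hrs (hrv r hr (0 + 2)) (hrv r hr (0 + 4)) (hrv s hs _) (hrv s hs _)
      (hv.ne (hne 0).2.1) hn (hr.2 _) (hr.2 _) (hs.2 _) (hs.2 _) (hnv 0)
  have hXR : ∀ x ∈ ⋃ i : ZMod 5, cycX G v i, ∀ r ∈ cycR G v, G.Adj x r := by
    intro x hx r hr
    obtain ⟨i, hxi⟩ := Set.mem_iUnion.1 hx
    have hxv : ∀ j, x ≠ v j := fun j e => hxi.1 ⟨j, e.symm⟩
    have hxr : x ≠ r := by
      rintro rfl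
      exact hr.2 i ((hxi.2 i).2 (Or.inl rfl))
    by_contra hn
    exact no_4K1 h4K1 hxr (hxv (i + 2)) (hxv (i + 4)) (hrv r hr _) (hrv r hr _)
      (hv.ne (hne i).2.1) hn (fun h => (hne i).2.2.2.1 ((hxi.2 _).1 h))
      (fun h => (hne i).2.2.2.2 ((hxi.2 _).1 h)) (hr.2 _) (hr.2 _) (hnv i)
  obtain ⟨r, s, t, hr, hs, ht, hrs, hrt, hst⟩ :=
    (Set.two_lt_ncard_iff (Set.toFinite _)).1 (not_le.1 hR)
  refine ⟨?_, ?_⟩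
  · intro x hx y hy hxy
    by_contra hn
    exact no_K5e hK5e hxy hn (hXR x hx r hr) (hXR x hx s hs) (hXR x hx t ht)
      (hXR y hy r hr) (hXR y hy s hs) (hXR y hy t ht)
      (hRcl r hr s hs hrs) (hRcl r hr t ht hrt) (hRcl s hs t ht hst)
  · intro hcon
    have hrX : r ∈ (⋃ i : ZMod 5, cycX G v i)ᶜ := fun hx => (hXR r hx r hr).ne rfl
    have hvX : v 0 ∈ (⋃ i : ZMod 5, cycX G v i)ᶜ := by
      intro hx
      obtain ⟨i, hi⟩ := Set.mem_iUnion.1 hx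
      exact hi.1 ⟨0, rfl⟩
    obtain ⟨p⟩ := hcon.preconnected ⟨r, hrX⟩ ⟨v 0, hvX⟩
    have inv : ∀ a b : ((⋃ i : ZMod 5, cycX G v i)ᶜ : Set V),
        (G.induce ((⋃ i : ZMod 5, cycX G v i)ᶜ : Set V)).Walk a b →
        a.1 ∈ cycR G v → b.1 ∈ cycR G v := by
      intro a b q
      induction q with
      | nil => exact id
      | @cons a1 b1 c1 h q ih =>
        intro ha
        apply ih
        have hadj := SimpleGraph.induce_adj.1 h
        refine ⟨?_, fun j hj => ?_⟩
        · rintro ⟨j, hj⟩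
          exact ha.2 j (hj ▸ hadj)
        · exact b1.2 (mem_X_of_adj hclaw v hv hC ha hadj j hj)
    exact (inv _ _ p hr).1 ⟨0, rfl⟩
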